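/- An integral domain R is a coherent DW-domain if and only if every finitely generated torsion-free R-module is w-FP-projective. -/

import Mathlib

open CategoryTheory

universe u

noncomputable section

variable (R : Type u) [CommRing R]

/-- The Ext group `Ext^n_R(M, N)` as an `R`-module (via `ModuleCat`). -/
def extMod (M N : Type u) [AddCommGroup M] [Module R M]
    [AddCommGroup N] [Module R N] (n : ℕ) : ModuleCat R :=
  ((Ext R (ModuleCat R) n).obj (Opposite.op (ModuleCat.of R M))).obj (ModuleCat.of R N)

/-- `J` is a Glaz–Vasconcelos ideal: finitely generated and the natural map
`R → Hom_R(J, R)` is bijective. -/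
def IsGVIdeal (J : Ideal R) : Prop :=
  J.FG ∧ Function.Bijective (fun r : R => (r • J.subtype : J →ₗ[R] R))

/-- A module is GV-torsion if every element is annihilated by some GV-ideal. -/
def IsGVTorsion (M : Type u) [AddCommGroup M] [Module R M] : Prop :=
  ∀ x : M, ∃ J : Ideal R, IsGVIdeal R J ∧ ∀ j ∈ J, j • x = 0

/-- An ideal `I` is a `w`-ideal if it is `w`-closed: whenever `J x ⊆ I` for some
GV-ideal `J`, one has `x ∈ I`. -/
def IsWIdeal (I : Ideal R) : Prop :=
  ∀ (x : R) (J : Ideal R), IsGVIdeal R J → (∀ j ∈ J, j * x ∈ I) → x ∈ I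

/-- `R` is a DW-ring if every maximal ideal is a `w`-ideal. -/
def IsDWRing : Prop :=
  ∀ m : Ideal R, m.IsMaximal → IsWIdeal R m

/-- `A` is absolutely `w`-pure if `Ext^1_R(N, A)` is GV-torsion for every
finitely presented module `N`. -/
def IsAbsolutelyWPure (A : Type u) [AddCommGroup A] [Module R A] : Prop :=
  ∀ (N : Type u) [AddCommGroup N] [Module R N], Module.FinitePresentation R N →
    IsGVTorsion R (extMod R N A 1)

/-- `M` is `w`-FP-projective if `Ext^1_R(M, A) = 0` for every absolutely
`w`-pure module `A`. -/
def IsWFPProjective (M : Type u) [AddCommGroup M] [Module R M] : Prop :=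
  ∀ (A : Type u) [AddCommGroup A] [Module R A], IsAbsolutelyWPure R A →
    Subsingleton (extMod R M A 1)

end
def IsCoherentRing (R : Type u) [CommRing R] : Prop :=
  ∀ I : Ideal R, I.FG → Module.FinitePresentation R I

section helpers
open Limits

/-- If `Ext¹(M,A)` computed by any resolution. -/
lemma ext_aux {R : Type u} [CommRing R] {M A : Type u} [AddCommGroup M] [Module R M]
    [AddCommGroup A] [Module R A] (P : ProjectiveResolution (ModuleCat.of R M)) :
    Subsingleton (extMod R M A 1) ↔ ∀ g : P.complex.X 1 ⟶ ModuleCat.of R A,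
      P.complex.d 2 1 ≫ g = 0 → ∃ h : P.complex.X 0 ⟶ ModuleCat.of R A,
        P.complex.d 1 0 ≫ h = g := by
  have e : Subsingleton (extMod R M A 1) ↔ IsZero (extMod R M A 1) :=
    ⟨fun _ => ModuleCat.isZero_of_subsingleton _, fun h => ModuleCat.subsingleton_of_isZero h⟩
  rw [e, extMod, (P.isoExt 1 (ModuleCat.of R A)).isZero_iff,
    ← HomologicalComplex.exactAt_iff_isZero_homology,
    HomologicalComplex.exactAt_iff' _ 0 1 2 (by simp) (by simp),
    ShortComplex.moduleCat_exact_iff]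
  rfl

lemma ext_smul {R : Type u} [CommRing R] {M A : Type u} [AddCommGroup M] [Module R M]
    [AddCommGroup A] [Module R A] (j : R) (hj : ∀ a : A, j • a = 0) (x : extMod R M A 1) :
    j • x = 0 := by
  let P := projectiveResolution (ModuleCat.of R M)
  let i : extMod R M A 1 ≅ _ := P.isoExt (R := R) 1 (ModuleCat.of R A)
  have h1 : ∀ z : (P.complex.linearYonedaObj R (ModuleCat.of R A)).homology 1, j • z = 0 := by
    intro z
    obtain ⟨y, rfl⟩ := (ModuleCat.epi_iff_surjective _).1
      (inferInstance : Epi ((P.complex.linearYonedaObj R (ModuleCat.of R A)).homologyπ 1)) z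
    have : j • y = 0 := by
      apply (ModuleCat.mono_iff_injective _).1
        (inferInstance : Mono ((P.complex.linearYonedaObj R (ModuleCat.of R A)).iCycles 1))
      rw [map_smul, map_zero]
      generalize ((P.complex.linearYonedaObj R (ModuleCat.of R A)).iCycles 1).hom y = w
      change (P.complex.X 1 ⟶ ModuleCat.of R A) at w
      change j • w = 0
      ext t
      exact hj _
    rw [← map_smul, this, map_zero]
  have h2 := h1 (i.hom x)
  rw [← map_smul] at h2
  have h3 := congrArg i.inv h2
  rw [map_zero] at h3
  exact (i.hom_inv_id_apply (j • x)).symm.trans h3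

lemma ext_iff {R : Type u} [CommRing R] {F M A : Type u} [AddCommGroup M] [Module R M]
    [AddCommGroup A] [Module R A] [AddCommGroup F] [Module R F] [Module.Projective R F]
    (p : F →ₗ[R] M) (hp : Function.Surjective p) :
    Subsingleton (extMod R M A 1) ↔ ∀ g : LinearMap.ker p →ₗ[R] A,
      ∃ h : F →ₗ[R] A, ∀ x : LinearMap.ker p, h x = g x := by
  let P := projectiveResolution (ModuleCat.of R M)
  have key : ∀ (F F' : Type u) [AddCommGroup F] [Module R F] [Module.Projective R F]
      [AddCommGroup F'] [Module R F'] [Module.Projective R F']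
      (p : F →ₗ[R] M) (hp : Function.Surjective p) (p' : F' →ₗ[R] M)
      (hp' : Function.Surjective p')
      (H : ∀ g : LinearMap.ker p →ₗ[R] A, ∃ h : F →ₗ[R] A, ∀ x : LinearMap.ker p, h x = g x),
      ∀ g : LinearMap.ker p' →ₗ[R] A, ∃ h : F' →ₗ[R] A, ∀ x : LinearMap.ker p', h x = g x := by
    intro F F' _ _ _ _ _ _ p hp p' hp' H g
    obtain ⟨u, hu⟩ := Module.projective_lifting_property p' p hp'
    obtain ⟨v, hv⟩ := Module.projective_lifting_property p p' hp
    have hu' : ∀ x, p' (u x) = p x := fun x => LinearMap.congr_fun hu x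
    have hv' : ∀ x, p (v x) = p' x := fun x => LinearMap.congr_fun hv x
    let u0 : LinearMap.ker p →ₗ[R] LinearMap.ker p' := u.restrict (fun x hx => by
      simpa [hu'] using hx)
    obtain ⟨e, he⟩ := H (g ∘ₗ u0)
    let c : F' →ₗ[R] LinearMap.ker p' := (LinearMap.id - u ∘ₗ v).codRestrict _ (fun x => by
      simp [hu', hv'])
    refine ⟨g ∘ₗ c + e ∘ₗ v, fun x => ?_⟩
    have hx : v x ∈ LinearMap.ker p := by simp [hv']
    have := he ⟨v x, hx⟩
    simp only [LinearMap.add_apply, LinearMap.comp_apply] at this ⊢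
    rw [this, ← map_add]
    congr 1
    ext
    simp [c, u0]
  let q : P.complex.X 0 →ₗ[R] M := (P.π.f 0).hom
  have hq : Function.Surjective q := (ModuleCat.epi_iff_surjective _).1
      (inferInstance : Epi (P.π.f 0))
  have : Module.Projective R (P.complex.X 0) :=
    (IsProjective.iff_projective (P.complex.X 0)).2 (P.projective 0)
  have hex0 := (ShortComplex.ShortExact.moduleCat_exact_iff_function_exact _).1 P.exact₀
  have hex1 := (ShortComplex.ShortExact.moduleCat_exact_iff_function_exact _).1 (P.exact_succ 0)
  dsimp at hex0 hex1
  have hd : ∀ x, P.complex.d 1 0 x ∈ LinearMap.ker q := fun x => (hex0 _).2 ⟨x, rfl⟩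
  rw [ext_aux P]
  refine Iff.trans ?_ ⟨key _ _ q hq p hp, key _ _ p hp q hq⟩
  let d : P.complex.X 1 →ₗ[R] LinearMap.ker q := (P.complex.d 1 0).hom.codRestrict _ hd
  have hdsurj : Function.Surjective d := by
    rintro ⟨y, hy⟩
    obtain ⟨x, hx⟩ := (hex0 y).1 hy
    exact ⟨x, Subtype.ext hx⟩
  constructor
  · intro H g
    obtain ⟨h, hh⟩ := H (ModuleCat.ofHom (g ∘ₗ d)) (by
      ext x
      have : d (P.complex.d 2 1 x) = 0 := Subtype.ext ((hex1 _).2 ⟨x, rfl⟩)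
      simp [this])
    refine ⟨h.hom, fun x => ?_⟩
    obtain ⟨y, rfl⟩ := hdsurj x
    exact congrArg (fun f => f.hom y) hh
  · intro H g hg
    have hk : LinearMap.ker d ≤ LinearMap.ker g.hom := by
      intro x hx
      obtain ⟨y, rfl⟩ := (hex1 x).1 (congrArg Subtype.val hx)
      exact congrArg (fun f => f.hom y) hg
    let g' : LinearMap.ker q →ₗ[R] A :=
      (LinearMap.ker d).liftQ g.hom hk ∘ₗ (d.quotKerEquivOfSurjective hdsurj).symm.toLinearMap
    have hg' : ∀ x, g' (d x) = g.hom x := by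
      intro x
      have : (d.quotKerEquivOfSurjective hdsurj).symm (d x) = (LinearMap.ker d).mkQ x := by
        rw [LinearEquiv.symm_apply_eq]; rfl
      simp [g', this]
    obtain ⟨h, hh⟩ := H g'
    refine ⟨ModuleCat.ofHom h, ?_⟩
    ext x
    exact (hh (d x)).trans (hg' x)

lemma fp_of_coherent {R : Type u} [CommRing R] (hR : IsCoherentRing R) (n : ℕ) :
    ∀ (M : Type u) [AddCommGroup M] [Module R M] [Module.Finite R M]
      (f : M →ₗ[R] (Fin n → R)), Function.Injective f → Module.FinitePresentation R M := by
  induction n with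
  | zero =>
    intro M _ _ _ f hf
    have : Subsingleton M := hf.subsingleton
    infer_instance
  | succ n ih =>
    intro M _ _ _ f hf
    let g : M →ₗ[R] R := LinearMap.proj 0 ∘ₗ f
    have h1 : Module.FinitePresentation R (LinearMap.range g) :=
      hR (LinearMap.range g) (Submodule.fg_range g)
    have hs := g.surjective_rangeRestrict
    have h2 : (LinearMap.ker g.rangeRestrict).FG :=
      Module.FinitePresentation.fg_ker _ hs
    have h3 : Module.Finite R (LinearMap.ker g.rangeRestrict) := Module.Finite.of_fg h2
    have h4 : Module.FinitePresentation R (LinearMap.ker g.rangeRestrict) := by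
      refine ih _ (LinearMap.pi (fun i => LinearMap.proj i.succ ∘ₗ f ∘ₗ Submodule.subtype _)) ?_
      rw [injective_iff_map_eq_zero]
      rintro ⟨x, hx⟩ h
      have : f x = 0 := by
        funext i
        refine Fin.cases ?_ (fun i => ?_) i
        · exact congrArg Subtype.val hx
        · exact congrFun h i
      exact Subtype.ext ((injective_iff_map_eq_zero f).1 hf x this)
    exact Module.finitePresentation_of_ker _ hs

lemma embed {R : Type u} [CommRing R] [IsDomain R] (M : Type u) [AddCommGroup M] [Module R M]
    [Module.Finite R M] [NoZeroSMulDivisors R M] :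
    ∃ (n : ℕ) (f : M →ₗ[R] (Fin n → R)), Function.Injective f := by
  classical
  let K := FractionRing R
  let V := LocalizedModule (nonZeroDivisors R) M
  let l : M →ₗ[R] V := LocalizedModule.mkLinearMap (nonZeroDivisors R) M
  have hl : Function.Injective l := by
    rw [injective_iff_map_eq_zero]
    intro x hx
    obtain ⟨c, hc⟩ := (IsLocalizedModule.eq_zero_iff (nonZeroDivisors R) l).1 hx
    exact (smul_eq_zero.1 (show (c : R) • x = 0 from hc)).resolve_left (nonZeroDivisors.coe_ne_zero c)
  have : Module.Finite K V := inferInstance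
  let b := Module.finBasis K V
  obtain ⟨S, hS⟩ := ‹Module.Finite R M›.fg_top
  let T : Finset K := (S ×ˢ Finset.univ).image (fun q => b.repr (l q.1) q.2)
  obtain ⟨d, hd⟩ := IsLocalization.exist_integer_multiples_of_finset (nonZeroDivisors R) T
  let ψ : M →ₗ[R] (Fin (Module.finrank K V) → K) :=
    (d : R) • ((b.equivFun.toLinearMap.restrictScalars R) ∘ₗ l)
  have hψ : Function.Injective ψ := by
    rw [injective_iff_map_eq_zero]
    intro x hx
    have := (smul_eq_zero.1 (show (d : R) • b.equivFun (l x) = 0 from hx)).resolve_left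
      (nonZeroDivisors.coe_ne_zero d)
    apply hl
    simpa using this
  let ι : (Fin (Module.finrank K V) → R) →ₗ[R] (Fin (Module.finrank K V) → K) :=
    (Algebra.linearMap R K).compLeft _
  have hι : Function.Injective ι := by
    intro x y h
    funext i
    exact IsFractionRing.injective R K (congrFun h i)
  have hr : ∀ x, ψ x ∈ LinearMap.range ι := by
    intro x
    have : (⊤ : Submodule R M) ≤ (LinearMap.range ι).comap ψ := by
      rw [← hS, Submodule.span_le]
      intro m hm
      have : ∀ i, ∃ r : R, algebraMap R K r = (d : R) • b.repr (l m) i := fun i =>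
        hd _ (Finset.mem_image.2 ⟨(m, i), by simpa using hm, rfl⟩)
      choose r hr using this
      exact ⟨r, funext hr⟩
    exact this trivial
  refine ⟨Module.finrank K V, (LinearEquiv.ofInjective ι hι).symm.toLinearMap ∘ₗ ψ.codRestrict _ hr, ?_⟩
  refine (LinearEquiv.injective (LinearEquiv.ofInjective ι hι).symm).comp ?_
  intro x y h
  exact hψ (congrArg Subtype.val h)

lemma gv_top (R : Type u) [CommRing R] : IsGVIdeal R ⊤ := by
  refine ⟨(inferInstance : Module.Finite R R).fg_top, ?_, ?_⟩
  · intro a b h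
    simpa using LinearMap.congr_fun h ⟨1, trivial⟩
  · intro f
    refine ⟨f ⟨1, trivial⟩, ?_⟩
    ext ⟨x, hx⟩
    have : (⟨x, hx⟩ : (⊤ : Ideal R)) = x • ⟨1, trivial⟩ := by ext; simp
    rw [this, map_smul]
    simp [mul_comm]

lemma exists_inj (R : Type u) [CommRing R] (X : Type u) [AddCommGroup X] [Module R X] :
    ∃ (E : Type u) (_ : AddCommGroup E) (_ : Module R E) (f : X →ₗ[R] E),
      Module.Injective R E ∧ Function.Injective f := by
  let U : ModuleCat.{u} R := Injective.under (ModuleCat.of R X)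
  refine ⟨U, inferInstance, inferInstance,
    (Injective.ι (ModuleCat.of R X)).hom, ?_, ?_⟩
  · have : Injective (ModuleCat.of R U) :=
      inferInstanceAs (Injective (Injective.under (ModuleCat.of R X)))
    exact Module.injective_module_of_injective_object R _
  · exact (ModuleCat.mono_iff_injective _).1 inferInstance

lemma fp_of_wfp {R : Type u} [CommRing R] {M : Type u} [AddCommGroup M] [Module R M]
    [Module.Finite R M] (H : IsWFPProjective R M) : Module.FinitePresentation R M := by
  classical
  obtain ⟨n, p, hp⟩ := Module.Finite.exists_fin' R M
  let F := Fin n → R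
  let ι := {S : Submodule R F // S.FG ∧ S ≤ LinearMap.ker p}
  have : Nonempty ι := ⟨⟨⊥, Submodule.fg_bot, bot_le⟩⟩
  have : IsDirected ι (· ≤ ·) := ⟨fun a b =>
    ⟨⟨a.1 ⊔ b.1, a.2.1.sup b.2.1, sup_le a.2.2 b.2.2⟩,
      (le_sup_left : a.1 ≤ a.1 ⊔ b.1), (le_sup_right : b.1 ≤ a.1 ⊔ b.1)⟩⟩
  choose E i1 i2 φ hE hφ using fun S : ι => exists_inj R (F ⧸ S.1)
  let D : Submodule R (∀ S, E S) :=
    { carrier := {x | ∃ S0, ∀ S, S0 ≤ S → x S = 0}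
      zero_mem' := ⟨Classical.arbitrary ι, fun _ _ => rfl⟩
      add_mem' := by
        rintro x y ⟨a, ha⟩ ⟨b, hb⟩
        obtain ⟨c, hac, hbc⟩ := exists_ge_ge a b
        exact ⟨c, fun S hS => by simp [ha S (hac.trans hS), hb S (hbc.trans hS)]⟩
      smul_mem' := by
        rintro r x ⟨a, ha⟩
        exact ⟨a, fun S hS => by simp [ha S hS]⟩ }
  have bound : ∀ (N : Type u) [AddCommGroup N] [Module R N] [Module.Finite R N]
      (f : N →ₗ[R] D), ∃ S0, ∀ S, S0 ≤ S → ∀ x, (f x).1 S = 0 := by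
    intro N _ _ hN f
    obtain ⟨T, hT⟩ := hN.fg_top
    choose s hs using fun x : N => (f x).2
    obtain ⟨S0, hS0⟩ := Finset.exists_le (T.image s)
    refine ⟨S0, fun S hS x => ?_⟩
    have : (⊤ : Submodule R N) ≤ LinearMap.ker (LinearMap.proj S ∘ₗ D.subtype ∘ₗ f) := by
      rw [← hT, Submodule.span_le]
      intro t ht
      exact hs t S ((hS0 _ (Finset.mem_image_of_mem s ht)).trans hS)
    exact this (show x ∈ ⊤ from trivial)
  have hD : IsAbsolutelyWPure R D := by
    intro N _ _ hN x
    refine ⟨⊤, gv_top R, fun j _ => ?_⟩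
    obtain ⟨m, q, hq, hk⟩ : ∃ (m : ℕ) (q : (Fin m → R) →ₗ[R] N), Function.Surjective q ∧
        (LinearMap.ker q).FG := by
      obtain ⟨m, q, hq⟩ := Module.Finite.exists_fin' R N
      exact ⟨m, q, hq, Module.FinitePresentation.fg_ker q hq⟩
    have : Subsingleton (extMod R N D 1) := by
      rw [ext_iff q hq]
      intro g
      have : Module.Finite R (LinearMap.ker q) := Module.Finite.of_fg hk
      obtain ⟨S0, hS0⟩ := bound _ g
      have ex : ∀ S, ∃ h : (Fin m → R) →ₗ[R] E S, (∀ x : LinearMap.ker q, h x = (g x).1 S) ∧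
          (S0 ≤ S → h = 0) := by
        intro S
        by_cases hS : S0 ≤ S
        · exact ⟨0, fun x => by simp [hS0 S hS x], fun _ => rfl⟩
        · obtain ⟨h, hh⟩ := (hE S).out (LinearMap.ker q).subtype
            (Submodule.injective_subtype _) (LinearMap.proj S ∘ₗ D.subtype ∘ₗ g)
          exact ⟨h, hh, fun h' => absurd h' hS⟩
      choose h h1 h2 using ex
      refine ⟨(LinearMap.pi h).codRestrict D (fun x => ⟨S0, fun S hS => by simp [h2 S hS]⟩), ?_⟩
      intro x
      ext S
      exact h1 S x
    exact Subsingleton.elim _ _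
  have hext := (ext_iff p hp).1 (H D hD)
  let Φ : F →ₗ[R] (∀ S, E S) := LinearMap.pi (fun S => φ S ∘ₗ S.1.mkQ)
  have hΦ : ∀ x S, Φ x S = 0 ↔ x ∈ S.1 := by
    intro x S
    have : Φ x S = φ S (S.1.mkQ x) := rfl
    rw [this, map_eq_zero_iff _ (hφ S)]
    simp
  let g : LinearMap.ker p →ₗ[R] D := (Φ ∘ₗ Submodule.subtype _).codRestrict D (by
    rintro ⟨x, hx⟩
    refine ⟨⟨Submodule.span R {x}, Submodule.fg_span_singleton x, by simpa using hx⟩, ?_⟩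
    intro S hS
    exact (hΦ x S).2 (hS (Submodule.mem_span_singleton_self x)))
  obtain ⟨h, hh⟩ := hext g
  obtain ⟨S0, hS0⟩ := bound F h
  have : LinearMap.ker p = S0.1 := by
    refine le_antisymm (fun x hx => ?_) S0.2.2
    rw [← hΦ]
    have h1 := hS0 S0 le_rfl x
    rw [hh ⟨x, hx⟩] at h1
    exact h1
  exact Module.finitePresentation_of_surjective p hp (this ▸ S0.2.1)

lemma gv_eq_top {R : Type u} [CommRing R] [IsDomain R] (J : Ideal R) (hJ : IsGVIdeal R J)
    (H : IsWFPProjective R J) : J = ⊤ := by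
  classical
  have : Module.Finite R J := Module.Finite.of_fg hJ.1
  have hfp := fp_of_wfp H
  obtain ⟨n, p, hp⟩ := Module.Finite.exists_fin' R J
  have hfin : Module.Finite R (LinearMap.ker p) :=
    Module.Finite.of_fg (Module.FinitePresentation.fg_ker p hp)
  let K := LinearMap.ker p
  let A := K ⧸ (J • (⊤ : Submodule R K))
  have hA : ∀ j ∈ J, ∀ a : A, j • a = 0 := by
    intro j hj a
    obtain ⟨k, rfl⟩ := Submodule.mkQ_surjective _ a
    rw [← map_smul]
    rw [← LinearMap.mem_ker, Submodule.ker_mkQ]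
    exact Submodule.smul_mem_smul hj (Submodule.mem_top (x := k))
  have hAw : IsAbsolutelyWPure R A := fun N _ _ _ x =>
    ⟨J, hJ, fun j hj => ext_smul j (hA j hj) x⟩
  obtain ⟨f, hf⟩ := (ext_iff p hp).1 (H A hAw) (Submodule.mkQ _)
  obtain ⟨g, hg⟩ := Module.projective_lifting_property (Submodule.mkQ (J • (⊤ : Submodule R K))) f
    (Submodule.mkQ_surjective _)
  let φ : Module.End R K := g ∘ₗ K.subtype
  have hr : LinearMap.range (1 - φ) ≤ J • (⊤ : Submodule R K) := by
    rintro _ ⟨x, rfl⟩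
    have h1 : Submodule.mkQ (J • (⊤ : Submodule R K)) (g x) = Submodule.mkQ _ x :=
      (LinearMap.congr_fun hg x).trans (hf x)
    rw [← Submodule.ker_mkQ (J • (⊤ : Submodule R K)), LinearMap.mem_ker]
    simp only [LinearMap.sub_apply, map_sub]
    exact sub_eq_zero.2 h1.symm
  obtain ⟨q, hq, -, hc, hq0⟩ :=
    LinearMap.exists_monic_and_natDegree_eq_and_coeff_mem_pow_and_aeval_eq_zero R (1 - φ) J hr
  have h1 : q.eval 1 - 1 ∈ J := by
    rw [← Ideal.Quotient.eq_zero_iff_mem, map_sub, map_one, sub_eq_zero,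
      Polynomial.eval_eq_sum_range, map_sum, Finset.sum_range_succ, Finset.sum_eq_zero]
    · simp [hq.coeff_natDegree]
    · intro k hk
      have hk' : q.natDegree - k ≠ 0 := by have := Finset.mem_range.1 hk; omega
      rw [Ideal.Quotient.eq_zero_iff_mem]
      simpa using Ideal.pow_le_self hk' (hc k)
  obtain ⟨s, hs⟩ := Polynomial.X_sub_C_dvd_sub_C_eval (p := q) (a := 1)
  have h2 := congrArg (Polynomial.aeval (1 - φ)) hs
  rw [mul_comm] at h2
  simp only [map_sub, map_mul, hq0, Polynomial.aeval_X, Polynomial.aeval_C, map_one] at h2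
  have h3 : ∀ x : K, (Polynomial.aeval (1 - φ) s) (φ x) = q.eval 1 • x := by
    intro x
    have := LinearMap.congr_fun h2 x
    simpa using this.symm
  let e : (Fin n → R) →ₗ[R] (Fin n → R) :=
    q.eval 1 • LinearMap.id - K.subtype ∘ₗ (Polynomial.aeval (1 - φ) s) ∘ₗ g
  have he : LinearMap.ker p ≤ LinearMap.ker e := by
    intro x hx
    have := congrArg Subtype.val (h3 ⟨x, hx⟩)
    have h4 : φ ⟨x, hx⟩ = g x := rfl
    rw [h4] at this
    simp [e, this]
  let h : J →ₗ[R] (Fin n → R) :=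
    (LinearMap.ker p).liftQ e he ∘ₗ (p.quotKerEquivOfSurjective hp).symm.toLinearMap
  have hh : ∀ x, h (p x) = e x := by
    intro x
    have : (p.quotKerEquivOfSurjective hp).symm (p x) = (LinearMap.ker p).mkQ x := by
      rw [LinearEquiv.symm_apply_eq]; rfl
    simp [h, this]
  have hph : ∀ y, p (h y) = q.eval 1 • y := by
    intro y
    obtain ⟨x, rfl⟩ := hp y
    rw [hh]
    have : p (K.subtype ((Polynomial.aeval (1 - φ) s) (g x))) = 0 :=
      ((Polynomial.aeval (1 - φ) s) (g x)).2
    simp only [e, LinearMap.sub_apply, LinearMap.comp_apply, map_sub, this]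
    simp
  choose r hr' using fun i => hJ.2.2 (LinearMap.proj i ∘ₗ h)
  have hy : ∀ y : J, h y = (y : R) • r := by
    intro y
    funext i
    have := LinearMap.congr_fun (hr' i) y
    simpa [mul_comm] using this.symm
  obtain ⟨y, hy0⟩ : ∃ y : J, y ≠ 0 := by
    by_contra! hcon
    have : (1 : R) = 0 := hJ.2.1 (by ext y; simp [hcon y])
    exact one_ne_zero this
  have h5 := congrArg Subtype.val (hph y)
  rw [hy, map_smul] at h5
  have h6 : (p r : R) = q.eval 1 := by
    have hy1 : (y : R) ≠ 0 := fun h => hy0 (Subtype.ext h)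
    apply mul_left_cancel₀ hy1
    simpa [mul_comm] using h5
  rw [Ideal.eq_top_iff_one]
  have := J.sub_mem (p r).2 h1
  rw [h6] at this
  simpa using this

end helpers

/-- A domain `R` is a coherent DW-domain iff every finitely generated torsion-free
module is `w`-FP-projective. -/
theorem isCoherentDW_iff_fg_torsionFree_wFPProjective (R : Type u) [CommRing R]
    [IsDomain R] :
    (IsCoherentRing R ∧ IsDWRing R) ↔
      ∀ (M : Type u) [AddCommGroup M] [Module R M], Module.Finite R M →
        NoZeroSMulDivisors R M → IsWFPProjective R M := by
  constructor
  · rintro ⟨hc, hdw⟩ M _ _ hfin htf A _ _ hA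
    have hJ : ∀ J : Ideal R, IsGVIdeal R J → J = ⊤ := by
      intro J hJ
      by_contra hne
      obtain ⟨m, hm, hle⟩ := Ideal.exists_le_maximal J hne
      have := hdw m hm 1 J hJ (fun j hj => by simpa using hle hj)
      exact hm.ne_top ((Ideal.eq_top_iff_one m).2 this)
    obtain ⟨n, f, hf⟩ := embed (R := R) M
    have hfp := fp_of_coherent hc n M f hf
    have h0 : ∀ x : extMod R M A 1, x = 0 := by
      intro x
      obtain ⟨J, hJ1, hJ2⟩ := hA M hfp x
      rw [hJ J hJ1] at hJ2
      simpa using hJ2 1 trivial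
    exact ⟨fun a b => (h0 a).trans (h0 b).symm⟩
  · intro H
    have H' : ∀ J : Ideal R, J.FG → IsWFPProjective R J := fun J hJ =>
      H J (Module.Finite.of_fg hJ) ⟨fun h => smul_eq_zero.1 h⟩
    refine ⟨fun I hI => ?_, fun m hm x J hJ hx => ?_⟩
    · have : Module.Finite R I := Module.Finite.of_fg hI
      exact fp_of_wfp (H' I hI)
    · have := gv_eq_top J hJ (H' J hJ.1)
      simpa using hx 1 (this ▸ trivial)
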